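/- There exist two 16-point subsets W₁ and W₂ of ℙ³ such that every 16-point set Z = Z_a ∪ Z_b ∪ Z_c ∪ Z_d satisfying the half-grid hypotheses is projectively equivalent to W₁ or to W₂; that is, there is a linear automorphism of ℂ⁴ whose induced projective transformation maps W₁ onto Z or maps W₂ onto Z. In other words, up to projective equivalence there are at most two sets of 16 points distributed evenly on 4 skew lines satisfying the half-grid hypotheses. -/

import Mathlib

open Projectivization
open scoped LinearAlgebra.Projectivization

/-- The half-grid hypotheses for a 16-point set `Z = Z 0 ∪ Z 1 ∪ Z 2 ∪ Z 3` distributed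
evenly on four pairwise skew lines `R 0, …, R 3` in `ℙ³` (lines are given by their
2-dimensional subspaces of `ℂ⁴`):
* each `Z x` consists of 4 distinct points of the line `ℙ(R x)`;
* no nonzero homogeneous quadratic form on `ℂ⁴` vanishes at all points of `Z`;
* for each `x`, the 12 points `Z ∖ Z x` form a (3,4)-grid with respect to the remaining
  three lines: there are four pairwise skew lines `ℓ 0, …, ℓ 3`, each meeting each line
  `ℙ(R y)` (`y ≠ x`) in exactly one point, the 12 intersection points being exactly
  `Z ∖ Z x`. -/
structure HalfGridHyp (R : Fin 4 → Submodule ℂ (Fin 4 → ℂ))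
    (Z : Fin 4 → Set (ℙ ℂ (Fin 4 → ℂ))) : Prop where
  finrank_eq : ∀ x, Module.finrank ℂ (R x) = 2
  skew : ∀ x y, x ≠ y → R x ⊓ R y = ⊥
  ncard_eq : ∀ x, (Z x).ncard = 4
  mem_line : ∀ x, ∀ p ∈ Z x, p.submodule ≤ R x
  no_quadric : ¬ ∃ q : QuadraticForm ℂ (Fin 4 → ℂ), q ≠ 0 ∧
    ∀ x, ∀ p ∈ Z x, ∀ v ∈ Projectivization.submodule p, q v = 0
  grid : ∀ x : Fin 4, ∃ ℓ : Fin 4 → Submodule ℂ (Fin 4 → ℂ),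
    (∀ i, Module.finrank ℂ (ℓ i) = 2) ∧
    (∀ i j, i ≠ j → ℓ i ⊓ ℓ j = ⊥) ∧
    (∀ i, ∀ y, y ≠ x → ∃! p : ℙ ℂ (Fin 4 → ℂ),
      p.submodule ≤ ℓ i ∧ p.submodule ≤ R y) ∧
    {p : ℙ ℂ (Fin 4 → ℂ) | ∃ i y, y ≠ x ∧ p.submodule ≤ ℓ i ∧ p.submodule ≤ R y}
      = (⋃ y, Z y) \ Z x


/-!
Split the ambient space as `W × W` so that the four lines become `W × 0`, `0 × W`, the diagonal and
the graph of an endomorphism `A` of the plane `W`. The points on the four lines then have the same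
parameters `Q ⊆ ℙ(W)`, and both `A` and `1 - A` permute these four points; the configuration lies on
a quadric if `A` is scalar. A nontrivial translation cannot permute three or four points of the
affine line, so `A` is diagonal, with eigenvalues `l ≠ m`. Permuting `Q` forces the ratios `l / m`
and `(1 - l) / (1 - m)` to be `n`-th roots of unity and the affine part of `Q` to be a coset of the
group of these, with `n = 3` if `Q` contains the point at infinity and `n = 4` otherwise. If
`n = 3`, then `l` and `m` are the primitive sixth roots of unity. If `n = 4`, then `{l, m}` is
`{i, -i}`, `{1 + i, 1 - i}` or the set of inverses of the latter, and permuting the four lines, by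
which `A` is replaced by `1 - A` or `A⁻¹`, identifies the three cases.
-/
section Projectivization

variable {K V V' V'' : Type*} [Field K] [AddCommGroup V] [Module K V]
  [AddCommGroup V'] [Module K V'] [AddCommGroup V''] [Module K V'']

/-- Two sets of points are projectively equivalent if some linear isomorphism of the ambient
vector spaces maps one onto the other. -/
def ProjEquiv (S : Set (ℙ K V)) (S' : Set (ℙ K V')) : Prop :=
  ∃ F : V ≃ₗ[K] V', Projectivization.map F.toLinearMap F.injective '' S = S'

/-- The affine cone over a set of points, with the origin removed: the nonzero vectors
representing the points of `S`. -/
def cone (S : Set (ℙ K V)) : Set V :=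
  {v | ∃ hv : v ≠ 0, mk K v hv ∈ S}

theorem mk_mem_iff_mem_cone {S : Set (ℙ K V)} {v : V} (hv : v ≠ 0) :
    mk K v hv ∈ S ↔ v ∈ cone S :=
  ⟨fun h ↦ ⟨hv, h⟩, fun ⟨_, h⟩ ↦ h⟩

theorem mem_iff_rep_mem_cone {S : Set (ℙ K V)} {p : ℙ K V} : p ∈ S ↔ p.rep ∈ cone S := by
  rw [← mk_mem_iff_mem_cone p.rep_nonzero, mk_rep]

theorem cone_injective : Function.Injective (cone : Set (ℙ K V) → Set V) := by
  intro S S' h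
  ext p
  rw [mem_iff_rep_mem_cone, h, ← mem_iff_rep_mem_cone]

theorem smul_mem_cone_iff {S : Set (ℙ K V)} {c : K} (hc : c ≠ 0) {v : V} :
    c • v ∈ cone S ↔ v ∈ cone S := by
  have mk_smul (hv : v ≠ 0) : mk K (c • v) (smul_ne_zero hc hv) = mk K v hv :=
    (mk_eq_mk_iff' K _ _ _ _).2 ⟨c, rfl⟩
  constructor
  · rintro ⟨hcv, h⟩
    have hv : v ≠ 0 := right_ne_zero_of_smul hcv
    exact ⟨hv, mk_smul hv ▸ h⟩
  · rintro ⟨hv, h⟩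
    exact ⟨smul_ne_zero hc hv, (mk_smul hv).symm ▸ h⟩

theorem cone_iUnion {ι : Type*} (S : ι → Set (ℙ K V)) : cone (⋃ i, S i) = ⋃ i, cone (S i) := by
  ext v
  simp only [cone, Set.mem_iUnion, Set.mem_ofPred_eq, exists_comm (α := v ≠ 0)]

theorem cone_image_map (f : V →ₗ[K] V') (hf : Function.Injective f) (S : Set (ℙ K V)) :
    cone (Projectivization.map f hf '' S) = f '' cone S := by
  ext v
  constructor
  · rintro ⟨hv, p, hp, hpv⟩
    induction p using Projectivization.ind with | h w hw =>
    obtain ⟨c, rfl⟩ := (mk_eq_mk_iff' K _ _ _ _).1 hpv.symm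
    exact ⟨c • w, (smul_mem_cone_iff (left_ne_zero_of_smul hv)).2 ⟨hw, hp⟩, map_smul f c w⟩
  · rintro ⟨w, ⟨hw, hwS⟩, rfl⟩
    exact ⟨(map_ne_zero_iff f hf).2 hw, mk K w hw, hwS, rfl⟩

theorem image_map_eq_iff_image_cone_eq {f : V →ₗ[K] V'} (hf : Function.Injective f)
    {S : Set (ℙ K V)} {S' : Set (ℙ K V')} :
    Projectivization.map f hf '' S = S' ↔ f '' cone S = cone S' := by
  rw [← cone_injective.eq_iff, cone_image_map]

theorem projEquiv_iff_image_cone_eq {S : Set (ℙ K V)} {S' : Set (ℙ K V')} :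
    ProjEquiv S S' ↔ ∃ F : V ≃ₗ[K] V', F '' cone S = cone S' :=
  exists_congr fun F ↦ image_map_eq_iff_image_cone_eq F.injective

theorem ProjEquiv.refl (S : Set (ℙ K V)) : ProjEquiv S S :=
  projEquiv_iff_image_cone_eq.2 ⟨.refl K V, Set.image_id _⟩

theorem ProjEquiv.symm {S : Set (ℙ K V)} {S' : Set (ℙ K V')} (h : ProjEquiv S S') :
    ProjEquiv S' S := by
  rw [projEquiv_iff_image_cone_eq] at h ⊢
  obtain ⟨F, hF⟩ := h
  exact ⟨F.symm, by simp [← hF, Set.image_image]⟩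

theorem ProjEquiv.trans {S : Set (ℙ K V)} {S' : Set (ℙ K V')} {S'' : Set (ℙ K V'')}
    (h : ProjEquiv S S') (h' : ProjEquiv S' S'') : ProjEquiv S S'' := by
  rw [projEquiv_iff_image_cone_eq] at h h' ⊢
  obtain ⟨F, hF⟩ := h
  obtain ⟨G, hG⟩ := h'
  refine ⟨F.trans G, ?_⟩
  rw [← hG, ← hF, Set.image_image]
  rfl

theorem ncard_image_map {f : V →ₗ[K] V'} (hf : Function.Injective f) (S : Set (ℙ K V)) :
    (Projectivization.map f hf '' S).ncard = S.ncard :=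
  Set.ncard_image_of_injective S (Projectivization.map_injective f hf)

end Projectivization

section Grid

variable {K W W' : Type*} [Field K] [AddCommGroup W] [Module K W] [AddCommGroup W'] [Module K W']

/-- Parametrizations of four lines in `ℙ(W × W)`. Any four pairwise skew lines in `ℙ³` are the
ranges of these maps in suitable coordinates; `A` is then the cross-ratio of the lines, as an
endomorphism of the first one. -/
def lineIncl (A : Module.End K W) : Fin 4 → W →ₗ[K] W × W :=
  ![.inl K W W, .inr K W W, .prod .id .id, .prod .id A]

theorem lineIncl_injective (A : Module.End K W) (x : Fin 4) :
    Function.Injective (lineIncl A x) := by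
  intro u v huv
  fin_cases x <;> simp_all [lineIncl]

/-- The points of the four lines `lineIncl A x` whose parameter lies in `Q`. -/
def gridSet (A : Module.End K W) (Q : Set (ℙ K W)) : Set (ℙ K (W × W)) :=
  ⋃ x, Projectivization.map (lineIncl A x) (lineIncl_injective A x) '' Q

theorem cone_gridSet (A : Module.End K W) (Q : Set (ℙ K W)) :
    cone (gridSet A Q) = ⋃ x, lineIncl A x '' cone Q := by
  simp only [gridSet, cone_iUnion, cone_image_map]

theorem eq_of_lineIncl_eq {A : Module.End K W} (hA : Function.Injective A)
    (hA' : Function.Injective ⇑(1 - A)) {x y : Fin 4} {u v : W} (hu : u ≠ 0)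
    (h : lineIncl A x u = lineIncl A y v) : x = y := by
  have hAu : A u ≠ 0 := (map_ne_zero_iff A hA).2 hu
  have hAu' : u - A u ≠ 0 := (map_ne_zero_iff _ hA').2 hu
  fin_cases x <;> fin_cases y <;> simp [lineIncl] at h <;> grind

theorem ncard_gridSet {A : Module.End K W} (hA : Function.Injective A)
    (hA' : Function.Injective ⇑(1 - A)) (Q : Set (ℙ K W)) :
    (gridSet A Q).ncard = 4 * Q.ncard := by
  let point (i : Fin 4 × ℙ K W) : ℙ K (W × W) :=
    Projectivization.map (lineIncl A i.1) (lineIncl_injective A i.1) i.2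
  have point_injective : Function.Injective point := by
    rintro ⟨x, p⟩ ⟨y, q⟩ hxy
    obtain rfl : x = y := by
      induction p using Projectivization.ind with | h u hu =>
      induction q using Projectivization.ind with | h v hv =>
      obtain ⟨c, hc⟩ := (mk_eq_mk_iff' K _ _ _ _).1 hxy
      exact eq_of_lineIncl_eq hA hA' hu (v := c • v) (by rw [map_smul, hc])
    exact Prod.ext rfl (Projectivization.map_injective _ _ hxy)
  have gridSet_eq : gridSet A Q = point '' (Set.univ ×ˢ Q) := by
    ext p
    simp [gridSet, point]
  rw [gridSet_eq, Set.ncard_image_of_injective _ point_injective, Set.ncard_prod,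
    Set.ncard_univ, Nat.card_fin]

theorem projEquiv_gridSet {A : Module.End K W} {A' : Module.End K W'} {Q : Set (ℙ K W)}
    {Q' : Set (ℙ K W')} (F : (W × W) ≃ₗ[K] W' × W') (σ : Equiv.Perm (Fin 4))
    (B : Fin 4 → W →ₗ[K] W') (hF : ∀ x u, F (lineIncl A x u) = lineIncl A' (σ x) (B x u))
    (hB : ∀ x, B x '' cone Q = cone Q') : ProjEquiv (gridSet A Q) (gridSet A' Q') := by
  refine projEquiv_iff_image_cone_eq.2 ⟨F, ?_⟩
  have image_line (x : Fin 4) :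
      F '' (lineIncl A x '' cone Q) = lineIncl A' (σ x) '' cone Q' := by
    rw [← hB x, Set.image_image, Set.image_image]
    exact Set.image_congr' (hF x)
  rw [cone_gridSet, cone_gridSet, Set.image_iUnion, Set.iUnion_congr image_line]
  exact σ.surjective.iUnion_comp fun x ↦ lineIncl A' x '' cone Q'

theorem projEquiv_gridSet_conj {A : Module.End K W} {A' : Module.End K W'} (P : W ≃ₗ[K] W')
    (hP : ∀ u, P (A u) = A' (P u)) {Q : Set (ℙ K W)} {Q' : Set (ℙ K W')}
    (hQ : P '' cone Q = cone Q') : ProjEquiv (gridSet A Q) (gridSet A' Q') := by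
  refine projEquiv_gridSet (P.prodCongr P) 1 (fun _ ↦ P) (fun x u ↦ ?_) fun _ ↦ hQ
  fin_cases x <;> simp [lineIncl, hP]

theorem neg_image_cone (Q : Set (ℙ K W)) : (-LinearMap.id : W →ₗ[K] W) '' cone Q = cone Q := by
  ext v
  simpa using smul_mem_cone_iff (S := Q) (v := v) (neg_ne_zero.2 (one_ne_zero (α := K)))

theorem projEquiv_gridSet_one_sub (A : Module.End K W) (Q : Set (ℙ K W)) :
    ProjEquiv (gridSet A Q) (gridSet (1 - A) Q) := by
  let f : W × W →ₗ[K] W × W := .prod (.fst K W W) (.fst K W W - .snd K W W)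
  have f_apply (u v : W) : f (u, v) = (u, u - v) := rfl
  have f_involutive : Function.Involutive f := fun v ↦ by simp [f]
  refine projEquiv_gridSet (.ofInvolutive f f_involutive) (Equiv.swap 0 2)
    ![.id, -.id, .id, .id] (fun x u ↦ ?_) fun x ↦ ?_
  · rw [LinearEquiv.coe_ofInvolutive]
    fin_cases x <;> simp [lineIncl, f_apply, Equiv.swap_apply_of_ne_of_ne]
  · fin_cases x <;> first | exact neg_image_cone Q | exact Set.image_id _

theorem projEquiv_gridSet_inv {A A' : Module.End K W} (hA : A' * A = 1) {Q : Set (ℙ K W)}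
    (hQ : A '' cone Q = cone Q) : ProjEquiv (gridSet A Q) (gridSet A' Q) := by
  have hA_apply (u : W) : A' (A u) = u := LinearMap.congr_fun hA u
  refine projEquiv_gridSet (LinearEquiv.prodComm K W W) (Equiv.swap 0 1) ![.id, .id, .id, A]
    (fun x u ↦ ?_) fun x ↦ ?_
  · fin_cases x <;> simp [lineIncl, Equiv.swap_apply_of_ne_of_ne, hA_apply]
  · fin_cases x <;> simp [hQ]

end Grid

section HalfGrid

variable {K V : Type*} [Field K] [AddCommGroup V] [Module K V]

/-- A half grid over an arbitrary field: four points on each of four pairwise skew lines `R x`,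
spanning the ambient space, not on a common quadric, such that the line through any point of one
of the lines that meets two of the other lines does so in points of the configuration. This keeps
only as much of the three-line grid structure as determines the configuration. -/
structure IsHalfGrid (R : Fin 4 → Submodule K V) (Z : Fin 4 → Set (ℙ K V)) : Prop where
  finrank_eq : ∀ x, Module.finrank K (R x) = 2
  isCompl : ∀ x y, x ≠ y → IsCompl (R x) (R y)
  ncard_eq : ∀ x, (Z x).ncard = 4
  mem_line : ∀ x, ∀ p ∈ Z x, p.submodule ≤ R x
  no_quadric : ¬ ∃ q : QuadraticForm K V, q ≠ 0 ∧ ∀ x, ∀ p ∈ Z x, ∀ v ∈ p.submodule, q v = 0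
  exists_collinear : ∀ x y z, x ≠ y → x ≠ z → y ≠ z → ∀ p ∈ Z x, ∃ q ∈ Z y, ∃ r ∈ Z z,
    r.submodule ≤ p.submodule ⊔ q.submodule

theorem mem_submodule_of_mem_cone {S : Set (ℙ K V)} {M : Submodule K V}
    (h : ∀ p ∈ S, p.submodule ≤ M) {v : V} (hv : v ∈ cone S) : v ∈ M := by
  obtain ⟨hv0, hvS⟩ := hv
  exact h _ hvS (by simp)

variable {R : Fin 4 → Submodule K V} {Z : Fin 4 → Set (ℙ K V)}

theorem IsHalfGrid.cone_subset (h : IsHalfGrid R Z) {x : Fin 4} : cone (Z x) ⊆ R x :=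
  fun _ ↦ mem_submodule_of_mem_cone (h.mem_line x)

theorem IsHalfGrid.eq_zero_of_mem (h : IsHalfGrid R Z) {x y : Fin 4} (hxy : x ≠ y) {v : V}
    (hx : v ∈ R x) (hy : v ∈ R y) : v = 0 :=
  Submodule.disjoint_def.1 (h.isCompl x y hxy).disjoint v hx hy

theorem IsHalfGrid.exists_add_mem_cone (h : IsHalfGrid R Z) {x y z : Fin 4} (hxy : x ≠ y)
    (hxz : x ≠ z) (hyz : y ≠ z) {v : V} (hv : v ∈ cone (Z x)) :
    ∃ w ∈ cone (Z y), v + w ∈ cone (Z z) := by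
  obtain ⟨hv0, hvZ⟩ := hv
  obtain ⟨q, hq, r, hr, hle⟩ := h.exists_collinear x y z hxy hxz hyz _ hvZ
  rw [mem_iff_rep_mem_cone] at hq hr
  have hqR : q.rep ∈ R y := h.cone_subset hq
  have hrR : r.rep ∈ R z := h.cone_subset hr
  have hvR : v ∈ R x := h.cone_subset ⟨hv0, hvZ⟩
  rw [submodule_mk, submodule_eq, submodule_eq, ← Submodule.span_insert,
    Submodule.span_singleton_le_iff_mem, Submodule.mem_span_pair] at hle
  obtain ⟨a, b, hab⟩ := hle
  have ha : a ≠ 0 := by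
    rintro rfl
    refine r.rep_nonzero (h.eq_zero_of_mem hyz ?_ hrR)
    simpa [← hab] using (R y).smul_mem b hqR
  have hb : b ≠ 0 := by
    rintro rfl
    refine r.rep_nonzero (h.eq_zero_of_mem hxz ?_ hrR)
    simpa [← hab] using (R x).smul_mem a hvR
  refine ⟨(a⁻¹ * b) • q.rep, (smul_mem_cone_iff (mul_ne_zero (inv_ne_zero ha) hb)).2 hq, ?_⟩
  rwa [← smul_mem_cone_iff ha, smul_add, smul_smul, mul_inv_cancel_left₀ ha, hab]

theorem sup_submodule_eq_of_finrank_eq_two {p q : ℙ K V} {M : Submodule K V}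
    (hM : Module.finrank K M = 2) (hp : p.submodule ≤ M) (hq : q.submodule ≤ M)
    (hpq : Disjoint p.submodule q.submodule) : p.submodule ⊔ q.submodule = M := by
  have : FiniteDimensional K M := .of_finrank_pos (by lia)
  have : FiniteDimensional K p.submodule := .of_finrank_pos (by simp [finrank_submodule])
  have : FiniteDimensional K q.submodule := .of_finrank_pos (by simp [finrank_submodule])
  refine Submodule.eq_of_le_of_finrank_eq (sup_le hp hq) ?_
  have hdim := Submodule.finrank_sup_add_finrank_inf_eq p.submodule q.submodule
  rw [hpq.eq_bot, finrank_bot, finrank_submodule, finrank_submodule] at hdim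
  lia

end HalfGrid

section HalfGridHyp

variable {R : Fin 4 → Submodule ℂ (Fin 4 → ℂ)} {Z : Fin 4 → Set (ℙ ℂ (Fin 4 → ℂ))}

theorem HalfGridHyp.disjoint_submodule (h : HalfGridHyp R Z) {x y : Fin 4} (hxy : x ≠ y)
    {p q : ℙ ℂ (Fin 4 → ℂ)} (hp : p.submodule ≤ R x) (hq : q.submodule ≤ R y) :
    Disjoint p.submodule q.submodule :=
  (disjoint_iff.2 (h.skew x y hxy)).mono hp hq

theorem HalfGridHyp.not_submodule_le (h : HalfGridHyp R Z) {x y : Fin 4} (hxy : x ≠ y)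
    {p : ℙ ℂ (Fin 4 → ℂ)} (hp : p ∈ Z x) : ¬ p.submodule ≤ R y := fun hpy ↦ by
  have hdim := p.finrank_submodule
  rw [disjoint_self.1 (h.disjoint_submodule hxy (h.mem_line x p hp) hpy), finrank_bot] at hdim
  exact zero_ne_one hdim

theorem HalfGridHyp.mem_of_submodule_le (h : HalfGridHyp R Z) {y : Fin 4}
    {p : ℙ ℂ (Fin 4 → ℂ)} (hp : p ∈ ⋃ x, Z x) (hpy : p.submodule ≤ R y) : p ∈ Z y := by
  obtain ⟨x, hx⟩ := Set.mem_iUnion.1 hp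
  by_cases hxy : x = y
  · exact hxy ▸ hx
  · exact absurd hpy (h.not_submodule_le hxy hx)

theorem HalfGridHyp.exists_collinear (h : HalfGridHyp R Z) {x y : Fin 4} (hxy : x ≠ y)
    (z : Fin 4) {p : ℙ ℂ (Fin 4 → ℂ)} (hp : p ∈ Z x) :
    ∃ q ∈ Z y, ∃ r ∈ Z z, r.submodule ≤ p.submodule ⊔ q.submodule := by
  obtain ⟨w, hxw, hyw, hzw⟩ : ∃ w : Fin 4, x ≠ w ∧ y ≠ w ∧ z ≠ w :=
    (by decide : ∀ x y z : Fin 4, ∃ w, x ≠ w ∧ y ≠ w ∧ z ≠ w) x y z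
  obtain ⟨ℓ, hℓ, -, hmeet, hgrid⟩ := h.grid w
  obtain ⟨i, -, -, hpi, -⟩ : p ∈ {p | ∃ i y, y ≠ w ∧ p.submodule ≤ ℓ i ∧ p.submodule ≤ R y} :=
    hgrid ▸ ⟨Set.mem_iUnion_of_mem x hp, fun hpw ↦
      h.not_submodule_le hxw hp (h.mem_line w p hpw)⟩
  have exists_mem_transversal {u : Fin 4} (hu : u ≠ w) : ∃ q ∈ Z u, q.submodule ≤ ℓ i := by
    obtain ⟨q, ⟨hqi, hqu⟩, -⟩ := hmeet i u hu
    have hq : q ∈ (⋃ y, Z y) \ Z w := hgrid ▸ ⟨i, u, hu, hqi, hqu⟩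
    exact ⟨q, h.mem_of_submodule_le hq.1 hqu, hqi⟩
  obtain ⟨q, hq, hqi⟩ := exists_mem_transversal hyw
  obtain ⟨r, hr, hri⟩ := exists_mem_transversal hzw
  have hpq := h.disjoint_submodule hxy (h.mem_line x p hp) (h.mem_line y q hq)
  exact ⟨q, hq, r, hr, (sup_submodule_eq_of_finrank_eq_two (hℓ i) hpi hqi hpq).symm ▸ hri⟩

theorem HalfGridHyp.isHalfGrid (h : HalfGridHyp R Z) : IsHalfGrid R Z where
  finrank_eq := h.finrank_eq
  isCompl x y hxy := (Submodule.isCompl_iff_disjoint _ _ (by simp [h.finrank_eq])).2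
    (disjoint_iff.2 (h.skew x y hxy))
  ncard_eq := h.ncard_eq
  mem_line := h.mem_line
  no_quadric := h.no_quadric
  exists_collinear _ _ z hxy _ _ _ hp := h.exists_collinear hxy z hp

end HalfGridHyp

section Coordinates

variable {K V : Type*} [Field K] [AddCommGroup V] [Module K V]

theorem exists_equiv_sub_mem {M N L : Submodule K V} (hM : IsCompl L M) (hN : IsCompl L N) :
    ∃ e : M ≃ₗ[K] N, ∀ u : M, (u - e u : V) ∈ L := by
  refine ⟨(L.quotientEquivOfIsCompl M hM).symm.trans (L.quotientEquivOfIsCompl N hN), fun u ↦ ?_⟩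
  rw [← Submodule.Quotient.eq, LinearEquiv.trans_apply, Submodule.mk_quotientEquivOfIsCompl_apply]
  rfl

theorem mem_iff_exists_sub_of_sub_mem {M N L : Submodule K V} (hMN : IsCompl M N)
    (hN : Disjoint L N) {e : M → N} (he : ∀ u, (u - e u : V) ∈ L) {v : V} :
    v ∈ L ↔ ∃ u : M, (u - e u : V) = v := by
  refine ⟨fun hv ↦ ?_, by rintro ⟨u, rfl⟩; exact he u⟩
  obtain ⟨u, hu, w, hw, rfl⟩ := Submodule.mem_sup.1 (hMN.sup_eq_top ▸ Submodule.mem_top (x := v))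
  refine ⟨⟨u, hu⟩, ?_⟩
  have hdiff : w + e ⟨u, hu⟩ = 0 := by
    refine Submodule.disjoint_def.1 hN _ ?_ (N.add_mem hw (e _).2)
    convert L.sub_mem hv (he ⟨u, hu⟩) using 1
    simp
  simp [eq_neg_of_add_eq_zero_left hdiff, sub_eq_add_neg]

theorem exists_lineIncl_coordinates {R : Fin 4 → Submodule K V}
    (hR : ∀ x y, x ≠ y → IsCompl (R x) (R y)) :
    ∃ (A : Module.End K (R 0)) (F : (R 0 × R 0) ≃ₗ[K] V), Function.Injective A ∧
      Function.Injective ⇑(1 - A) ∧ ∀ x v, v ∈ R x ↔ ∃ u, F (lineIncl A x u) = v := by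
  have h01 := hR 0 1 (by decide)
  have h21 := hR 2 1 (by decide)
  have h31 := hR 3 1 (by decide)
  obtain ⟨e, he⟩ := exists_equiv_sub_mem (hR 2 0 (by decide)) h21
  obtain ⟨f, hf⟩ := exists_equiv_sub_mem (hR 3 0 (by decide)) h31
  let F : (R 0 × R 0) ≃ₗ[K] V := ((LinearEquiv.refl K _).prodCongr (e.trans (.neg K))).trans
    (Submodule.prodEquivOfIsCompl _ _ h01)
  have F_apply (u v : R 0) : F (u, v) = (u - e v : V) := by simp [F, sub_eq_add_neg]
  have injective_one_sub : Function.Injective ⇑(1 - (f.trans e.symm : Module.End K (R 0))) := by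
    refine (injective_iff_map_eq_zero _).2 fun u hu ↦ ?_
    have hef : e u = f u := e.eq_symm_apply.1 (sub_eq_zero.1 hu)
    have hF : F (u, u) = 0 := Submodule.disjoint_def.1 (hR 2 3 (by decide)).disjoint _
      (F_apply u u ▸ he u) (F_apply u u ▸ hef ▸ hf u)
    exact (Prod.mk_eq_zero.1 (F.map_eq_zero_iff.1 hF)).1
  refine ⟨f.trans e.symm, F, (f.trans e.symm).injective, injective_one_sub, fun x v ↦ ?_⟩
  fin_cases x
  · simp [lineIncl, F_apply]
  · suffices v ∈ R 1 ↔ ∃ u, -(e u : V) = v by simpa [lineIncl, F_apply]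
    constructor
    · exact fun hv ↦ ⟨e.symm (-⟨v, hv⟩), by simp⟩
    · rintro ⟨u, rfl⟩
      exact neg_mem (e u).2
  · simpa [lineIncl, F_apply] using mem_iff_exists_sub_of_sub_mem h01 h21.disjoint he
  · simpa [lineIncl, F_apply] using mem_iff_exists_sub_of_sub_mem h01 h31.disjoint hf

end Coordinates

section GridDatum

/-- The data of a half grid in the coordinates of `lineIncl`: four points on a projective line that
are permuted by the cross-ratio endomorphism `A` and by `1 - A`. The lines are pairwise skew as `A`
and `1 - A` are injective, and the grid is not on a quadric as `A` is not scalar. -/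
structure IsGridDatum {K W : Type*} [Field K] [AddCommGroup W] [Module K W] (A : Module.End K W)
    (Q : Set (ℙ K W)) : Prop where
  ncard_eq : Q.ncard = 4
  injective : Function.Injective A
  injective_one_sub : Function.Injective ⇑(1 - A)
  mapsTo : Set.MapsTo A (cone Q) (cone Q)
  mapsTo_one_sub : Set.MapsTo ⇑(1 - A) (cone Q) (cone Q)
  ne_smul_one : ∀ c : K, A ≠ c • 1

variable {K V W : Type*} [Field K] [AddCommGroup V] [Module K V] [AddCommGroup W] [Module K W]
  {R : Fin 4 → Submodule K V} {Z : Fin 4 → Set (ℙ K V)}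

theorem IsHalfGrid.add_mem_cone (h : IsHalfGrid R Z) {x y z : Fin 4} (hxy : x ≠ y)
    (hxz : x ≠ z) (hyz : y ≠ z) {v w : V} (hv : v ∈ cone (Z x)) (hw : w ∈ R y)
    (hvw : v + w ∈ R z) : w ∈ cone (Z y) ∧ v + w ∈ cone (Z z) := by
  obtain ⟨w', hw', hvw'⟩ := h.exists_add_mem_cone hxy hxz hyz hv
  have hdiff : w - w' = 0 := by
    refine h.eq_zero_of_mem hyz (sub_mem hw (h.cone_subset hw')) ?_
    convert sub_mem hvw (h.cone_subset hvw') using 1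
    abel
  obtain rfl := sub_eq_zero.1 hdiff
  exact ⟨hw', hvw'⟩

section Coordinates

variable {A : Module.End K W} {F : (W × W) →ₗ[K] V}

theorem IsHalfGrid.lineIncl_mem_cone (h : IsHalfGrid R Z) (hF : ∀ x u, F (lineIncl A x u) ∈ R x)
    {x y z : Fin 4} (hxy : x ≠ y) (hxz : x ≠ z) (hyz : y ≠ z) {u v w : W}
    (hu : F (lineIncl A x u) ∈ cone (Z x))
    (huv : lineIncl A x u + lineIncl A y v = lineIncl A z w) :
    F (lineIncl A y v) ∈ cone (Z y) ∧ F (lineIncl A z w) ∈ cone (Z z) := by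
  rw [← huv, map_add]
  refine h.add_mem_cone hxy hxz hyz hu (hF y v) ?_
  rw [← map_add, huv]
  exact hF z w

theorem IsHalfGrid.lineIncl_mem_cone_iff (h : IsHalfGrid R Z)
    (hF : ∀ x u, F (lineIncl A x u) ∈ R x) (x : Fin 4) (u : W) :
    F (lineIncl A x u) ∈ cone (Z x) ↔ F (lineIncl A 0 u) ∈ cone (Z 0) := by
  have collinear_012 : lineIncl A 0 u + lineIncl A 1 u = lineIncl A 2 u := by simp [lineIncl]
  have collinear_210 : lineIncl A 2 u + lineIncl A 1 (-u) = lineIncl A 0 u := by simp [lineIncl]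
  have collinear_013 : lineIncl A 0 u + lineIncl A 1 (A u) = lineIncl A 3 u := by simp [lineIncl]
  have collinear_310 : lineIncl A 3 u + lineIncl A 1 (-A u) = lineIncl A 0 u := by simp [lineIncl]
  fin_cases x
  · exact Iff.rfl
  · exact ⟨fun hu ↦ (h.lineIncl_mem_cone hF (by decide) (by decide) (by decide) hu
        (add_comm (lineIncl A 0 u) _ ▸ collinear_012)).1,
      fun hu ↦ (h.lineIncl_mem_cone hF (by decide) (by decide) (by decide) hu collinear_012).1⟩
  · exact
      ⟨fun hu ↦ (h.lineIncl_mem_cone hF (by decide) (by decide) (by decide) hu collinear_210).2,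
      fun hu ↦ (h.lineIncl_mem_cone hF (by decide) (by decide) (by decide) hu collinear_012).2⟩
  · exact
      ⟨fun hu ↦ (h.lineIncl_mem_cone hF (by decide) (by decide) (by decide) hu collinear_310).2,
      fun hu ↦ (h.lineIncl_mem_cone hF (by decide) (by decide) (by decide) hu collinear_013).2⟩

theorem IsHalfGrid.lineIncl_zero_apply_mem_cone (h : IsHalfGrid R Z)
    (hF : ∀ x u, F (lineIncl A x u) ∈ R x) {u : W} (hu : F (lineIncl A 0 u) ∈ cone (Z 0)) :
    F (lineIncl A 0 (A u)) ∈ cone (Z 0) := by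
  have collinear : lineIncl A 0 u + lineIncl A 1 (A u) = lineIncl A 3 u := by simp [lineIncl]
  rw [← h.lineIncl_mem_cone_iff hF 1]
  exact (h.lineIncl_mem_cone hF (by decide) (by decide) (by decide) hu collinear).1

theorem IsHalfGrid.lineIncl_zero_one_sub_apply_mem_cone (h : IsHalfGrid R Z)
    (hF : ∀ x u, F (lineIncl A x u) ∈ R x) {u : W} (hu : F (lineIncl A 0 u) ∈ cone (Z 0)) :
    F (lineIncl A 0 ((1 - A) u)) ∈ cone (Z 0) := by
  have collinear : lineIncl A 3 u + lineIncl A 2 (-A u) = lineIncl A 0 ((1 - A) u) := by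
    simp [lineIncl, sub_eq_add_neg]
  rw [← h.lineIncl_mem_cone_iff hF 3] at hu
  exact (h.lineIncl_mem_cone hF (by decide) (by decide) (by decide) hu collinear).2

end Coordinates

theorem exists_quadraticForm_lineIncl_smul_one_eq_zero (hW : Module.finrank K W = 2) (c : K) :
    ∃ q : QuadraticForm K (W × W), q ≠ 0 ∧
      ∀ x u, q (lineIncl (c • 1 : Module.End K W) x u) = 0 := by
  have : FiniteDimensional K W := .of_finrank_pos (by lia)
  let b := Module.finBasisOfFinrankEq K W hW
  let q : QuadraticForm K (W × W) :=
    QuadraticMap.linMulLin (b.coord 0 ∘ₗ .fst K W W) (b.coord 1 ∘ₗ .snd K W W) -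
      QuadraticMap.linMulLin (b.coord 1 ∘ₗ .fst K W W) (b.coord 0 ∘ₗ .snd K W W)
  have q_apply (u v : W) : q (u, v) = b.coord 0 u * b.coord 1 v - b.coord 1 u * b.coord 0 v := rfl
  refine ⟨q, fun hq ↦ ?_, fun x u ↦ ?_⟩
  · simpa [hq] using q_apply (b 0) (b 1)
  · fin_cases x <;> simp [lineIncl, q_apply] <;> ring

theorem IsHalfGrid.ne_smul_one (h : IsHalfGrid R Z) (hW : Module.finrank K W = 2)
    {A : Module.End K W} {F : (W × W) ≃ₗ[K] V}
    (hF : ∀ x, ∀ v ∈ R x, ∃ u, F (lineIncl A x u) = v) (c : K) : A ≠ c • 1 := by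
  rintro rfl
  obtain ⟨q, hq, hq0⟩ := exists_quadraticForm_lineIncl_smul_one_eq_zero hW c
  refine h.no_quadric ⟨q.comp F.symm, fun hqF ↦ hq ?_, fun x p hp v hv ↦ ?_⟩
  · ext v
    simpa using congr($hqF (F v))
  · obtain ⟨u, rfl⟩ := hF x v (h.mem_line x p hp hv)
    simpa using hq0 x u

theorem IsHalfGrid.exists_isGridDatum (h : IsHalfGrid R Z) :
    ∃ (A : Module.End K (R 0)) (Q : Set (ℙ K (R 0))),
      IsGridDatum A Q ∧ ProjEquiv (gridSet A Q) (⋃ x, Z x) := by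
  obtain ⟨A, F, hA, hA', hF⟩ := exists_lineIncl_coordinates h.isCompl
  have hF_mem (x : Fin 4) (u : R 0) : F (lineIncl A x u) ∈ R x := (hF x _).2 ⟨u, rfl⟩
  let L : R 0 →ₗ[K] V := F ∘ₗ lineIncl A 0
  have hL : Function.Injective L := F.injective.comp (lineIncl_injective A 0)
  let Q : Set (ℙ K (R 0)) := Projectivization.map L hL ⁻¹' Z 0
  have mem_cone_Q (u : R 0) : u ∈ cone Q ↔ L u ∈ cone (Z 0) :=
    ⟨fun ⟨hu, huQ⟩ ↦ ⟨(map_ne_zero_iff L hL).2 hu, huQ⟩,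
      fun ⟨hu, huQ⟩ ↦ ⟨(map_ne_zero_iff L hL).1 hu, huQ⟩⟩
  have image_line (x : Fin 4) : F '' (lineIncl A x '' cone Q) = cone (Z x) := by
    ext v
    simp only [Set.image_image, Set.mem_image, mem_cone_Q]
    constructor
    · rintro ⟨u, hu, rfl⟩
      exact (h.lineIncl_mem_cone_iff (F := F) hF_mem x u).2 hu
    · intro hv
      obtain ⟨u, rfl⟩ := (hF x v).1 (h.cone_subset hv)
      exact ⟨u, (h.lineIncl_mem_cone_iff (F := F) hF_mem x u).1 hv, rfl⟩
  have image_Q : Projectivization.map L hL '' Q = Z 0 := by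
    rw [image_map_eq_iff_image_cone_eq, ← image_line 0, Set.image_image]
    rfl
  refine ⟨A, Q, ⟨?_, hA, hA', fun u ↦ ?_, fun u ↦ ?_,
    h.ne_smul_one (h.finrank_eq 0) fun x v ↦ (hF x v).1⟩,
    projEquiv_iff_image_cone_eq.2 ⟨F, ?_⟩⟩
  · rw [← ncard_image_map hL, image_Q, h.ncard_eq]
  · rw [mem_cone_Q, mem_cone_Q]
    exact h.lineIncl_zero_apply_mem_cone hF_mem
  · rw [mem_cone_Q, mem_cone_Q]
    exact h.lineIncl_zero_one_sub_apply_mem_cone hF_mem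
  · rw [cone_gridSet, cone_iUnion, Set.image_iUnion, Set.iUnion_congr image_line]

end GridDatum

section InvariantSets

@[to_additive]
theorem pow_card_mul_prod_eq_prod_of_mapsTo {M : Type*} [CommMonoid M] {T : Finset M} {r : M}
    (hr : Set.InjOn (r * ·) T) (hT : Set.MapsTo (r * ·) T T) :
    r ^ T.card * ∏ z ∈ T, z = ∏ z ∈ T, z := by
  classical
  have image_eq : T.image (r * ·) = T :=
    Finset.eq_of_subset_of_card_le (Finset.image_subset_iff.2 hT) (Finset.card_image_of_injOn hr).ge
  calc r ^ T.card * ∏ z ∈ T, z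
      = ∏ z ∈ T, r * z := by rw [Finset.prod_mul_distrib, Finset.prod_const]
    _ = ∏ z ∈ T.image (r * ·), z := (Finset.prod_image (f := fun z ↦ z) hr).symm
    _ = ∏ z ∈ T, z := by rw [image_eq]

variable {K : Type*} [Field K]

theorem ncard_nsmul_eq_zero_of_mapsTo_add {T : Set K} (hT : T.Finite) {r : K}
    (hr : Set.MapsTo (r + ·) T T) : T.ncard • r = 0 := by
  lift T to Finset K using hT
  rw [Set.ncard_coe_finset]
  exact add_eq_right.1
    (nsmul_card_add_sum_eq_sum_of_mapsTo (add_right_injective r).injOn hr)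

theorem pow_ncard_eq_one_of_mapsTo_mul {T : Set K} (hT : T.Finite) (hT0 : 0 ∉ T) {r : K}
    (hr0 : r ≠ 0) (hr : Set.MapsTo (r * ·) T T) : r ^ T.ncard = 1 := by
  lift T to Finset K using hT
  rw [Set.ncard_coe_finset]
  refine (mul_eq_right₀ (Finset.prod_ne_zero_iff.2 fun z hz hz0 ↦ hT0 (hz0 ▸ hz))).1
    (pow_card_mul_prod_eq_prod_of_mapsTo (mul_right_injective₀ hr0).injOn hr)

theorem ncard_setOf_pow_eq_pow {ζ : K} {n : ℕ} (hn : 0 < n) (hζ : IsPrimitiveRoot ζ n) {c : K}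
    (hc : c ≠ 0) : {z : K | z ^ n = c ^ n}.ncard = n := by
  classical
  have setOf_eq : {z : K | z ^ n = c ^ n} = (Polynomial.nthRoots n (c ^ n)).toFinset := by
    ext z
    simp [Polynomial.mem_nthRoots hn]
  rw [setOf_eq, Set.ncard_coe_finset,
    Multiset.toFinset_card_of_nodup (hζ.nthRoots_nodup (pow_ne_zero n hc)),
    hζ.card_nthRoots, if_pos ⟨c, rfl⟩]

theorem eq_setOf_pow_eq_pow_of_mapsTo_mul {T : Set K} {ζ : K} {n : ℕ} (hn : 0 < n)
    (hζ : IsPrimitiveRoot ζ n) (hT : T.ncard = n) (hζT : Set.MapsTo (ζ * ·) T T) {c : K}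
    (hcT : c ∈ T) (hc : c ≠ 0) : T = {z | z ^ n = c ^ n} := by
  refine (Set.eq_of_subset_of_ncard_le (fun z hz ↦ ?_) ?_ ?_).symm
  · have : NeZero n := ⟨hn.ne'⟩
    obtain ⟨k, -, hk⟩ := hζ.eq_pow_of_pow_eq_one (ξ := z / c)
      (by rw [div_pow, hz, div_self (pow_ne_zero n hc)])
    have iterate_mem := hζT.iterate k hcT
    rw [mul_left_iterate, hk] at iterate_mem
    simpa only [div_mul_cancel₀ z hc] using iterate_mem
  · rw [hT, ncard_setOf_pow_eq_pow hn hζ hc]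
  · exact Set.finite_of_ncard_pos (hT ▸ hn)

end InvariantSets

section AffinePart

variable {K W W' : Type*} [Field K] [AddCommGroup W] [Module K W] [AddCommGroup W'] [Module K W']

/-- The points of `Q` in the affine chart of the projective line in which `b 0` is the point at
infinity and `b 1` is the origin. -/
def affinePart (b : Module.Basis (Fin 2) K W) (Q : Set (ℙ K W)) : Set K :=
  {z | z • b 0 + b 1 ∈ cone Q}

variable {b : Module.Basis (Fin 2) K W} {Q : Set (ℙ K W)}

theorem exists_smul_add_smul_eq (b : Module.Basis (Fin 2) K W) (u : W) :
    ∃ x y : K, x • b 0 + y • b 1 = u :=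
  ⟨b.repr u 0, b.repr u 1, by rw [← Fin.sum_univ_two fun i ↦ b.repr u i • b i, b.sum_repr]⟩

theorem smul_add_smul_mem_cone_iff {x y : K} :
    x • b 0 + y • b 1 ∈ cone Q ↔
      y ≠ 0 ∧ x / y ∈ affinePart b Q ∨ y = 0 ∧ x ≠ 0 ∧ b 0 ∈ cone Q := by
  rcases eq_or_ne y 0 with rfl | hy
  · rcases eq_or_ne x 0 with rfl | hx
    · simp [cone]
    · simp [smul_mem_cone_iff hx, hx]
  · have eq_smul : x • b 0 + y • b 1 = y • ((x / y) • b 0 + b 1) := by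
      rw [smul_add, smul_smul, mul_div_cancel₀ x hy]
    rw [eq_smul, smul_mem_cone_iff hy]
    simp [hy, affinePart]

theorem image_equiv_cone_eq {b' : Module.Basis (Fin 2) K W'} {Q' : Set (ℙ K W')}
    (haff : affinePart b Q = affinePart b' Q') (hinf : b 0 ∈ cone Q ↔ b' 0 ∈ cone Q') :
    b.equiv b' (.refl _) '' cone Q = cone Q' := by
  rw [LinearEquiv.image_eq_preimage_symm]
  ext v
  obtain ⟨x, y, rfl⟩ := exists_smul_add_smul_eq b' v
  simp [smul_add_smul_mem_cone_iff, haff, hinf]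

theorem zero_mem_affinePart_iff : 0 ∈ affinePart b Q ↔ b 1 ∈ cone Q := by
  simp [affinePart]

theorem ncard_affinePart :
    (affinePart b Q).ncard = (Q \ {mk K (b 0) (b.ne_zero 0)}).ncard := by
  have hb (z : K) : z • b 0 + b 1 ≠ 0 := fun h ↦ by
    simpa using congr(b.repr $h 1)
  let point (z : K) : ℙ K W := mk K (z • b 0 + b 1) (hb z)
  have point_injective : Function.Injective point := fun z w hzw ↦ by
    obtain ⟨a, ha⟩ := (mk_eq_mk_iff' K _ _ _ _).1 hzw
    obtain rfl : a = 1 := by simpa using congr(b.repr $ha 1)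
    simpa using congr(b.repr $ha 0).symm
  rw [← Set.ncard_image_of_injective _ point_injective]
  congr 1
  ext p
  constructor
  · rintro ⟨z, ⟨_, hz⟩, rfl⟩
    refine ⟨hz, fun h ↦ ?_⟩
    obtain ⟨a, ha⟩ := (mk_eq_mk_iff' K _ _ _ _).1 h
    simpa using congr(b.repr $ha 1)
  · induction p using Projectivization.ind with | h u hu =>
    rintro ⟨huQ, hub⟩
    obtain ⟨x, y, rfl⟩ := exists_smul_add_smul_eq b u
    have hy : y ≠ 0 := by
      rintro rfl
      exact hub ((mk_eq_mk_iff' K _ _ _ _).2 ⟨x, by rw [zero_smul, add_zero]⟩)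
    have mem_cone := (mk_mem_iff_mem_cone hu).1 huQ
    rw [smul_add_smul_mem_cone_iff] at mem_cone
    refine ⟨x / y, by simpa [hy] using mem_cone, (mk_eq_mk_iff' K _ _ _ _).2 ⟨y⁻¹, ?_⟩⟩
    rw [smul_add, smul_smul, smul_smul, inv_mul_cancel₀ hy, one_smul, div_eq_inv_mul]

theorem ncard_affinePart_of_mem (h : b 0 ∈ cone Q) : (affinePart b Q).ncard = Q.ncard - 1 := by
  rw [ncard_affinePart, Set.ncard_sdiff_singleton_of_mem ((mk_mem_iff_mem_cone _).2 h)]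

theorem ncard_affinePart_of_notMem (h : b 0 ∉ cone Q) : (affinePart b Q).ncard = Q.ncard := by
  rw [ncard_affinePart, Set.sdiff_singleton_eq_self (mt (mk_mem_iff_mem_cone _).1 h)]

theorem mapsTo_affinePart {B : Module.End K W} (hB : Set.MapsTo B (cone Q) (cone Q)) {l x m : K}
    (hB0 : B (b 0) = l • b 0) (hB1 : B (b 1) = x • b 0 + m • b 1) (hm : m ≠ 0) :
    Set.MapsTo (fun z ↦ (l * z + x) / m) (affinePart b Q) (affinePart b Q) := by
  intro z hz
  have apply_eq : B (z • b 0 + b 1) = (l * z + x) • b 0 + m • b 1 := by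
    rw [map_add, map_smul, hB0, hB1]
    module
  have mem := hB hz
  rw [apply_eq, smul_add_smul_mem_cone_iff] at mem
  simpa [hm] using mem

end AffinePart

section NormalForm

variable {K W : Type*} [Field K] [AddCommGroup W] [Module K W]

theorem four_ne_zero_of_neZero_two [NeZero (2 : K)] : (4 : K) ≠ 0 := by
  rw [show (4 : K) = 2 * 2 by norm_num]
  exact mul_ne_zero two_ne_zero two_ne_zero

theorem exists_basis_apply_eq (hW : Module.finrank K W = 2) {v w : W}
    (hvw : LinearIndependent K ![v, w]) :
    ∃ b : Module.Basis (Fin 2) K W, b 0 = v ∧ b 1 = w :=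
  ⟨basisOfLinearIndependentOfCardEqFinrank hvw (by simp [hW]), by simp, by simp⟩

theorem exists_linearIndependent_pair_of_finrank_eq_two (hW : Module.finrank K W = 2) {v : W}
    (hv : v ≠ 0) : ∃ w, LinearIndependent K ![v, w] := by
  by_contra! h
  have hle := finrank_le_one v fun w ↦ by
    simpa [LinearIndependent.pair_iff' hv] using h w
  lia

theorem exists_basis_diagonal_or_jordan [IsAlgClosed K] (hW : Module.finrank K W = 2)
    {A : Module.End K W} (hA : ∀ c : K, A ≠ c • 1) :
    ∃ b : Module.Basis (Fin 2) K W,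
      (∃ l m : K, l ≠ m ∧ A (b 0) = l • b 0 ∧ A (b 1) = m • b 1) ∨
        ∃ m : K, A (b 0) = m • b 0 ∧ A (b 1) = b 0 + m • b 1 := by
  have : FiniteDimensional K W := .of_finrank_pos (by lia)
  have : Nontrivial W := Module.nontrivial_of_finrank_pos (R := K) (by lia)
  obtain ⟨l, hl⟩ := Module.End.exists_eigenvalue A
  obtain ⟨v, hv⟩ := hl.exists_hasEigenvector
  have hAv : A v = l • v := hv.apply_eq_smul
  obtain ⟨w, hvw⟩ := exists_linearIndependent_pair_of_finrank_eq_two hW hv.2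
  obtain ⟨b, hb0, hb1⟩ := exists_basis_apply_eq hW hvw
  obtain ⟨x, m, hAw⟩ := exists_smul_add_smul_eq b (A w)
  rw [hb0, hb1] at hAw
  rcases ne_or_eq l m with hlm | rfl
  · have hvw' : LinearIndependent K ![v, w + (x / (m - l)) • v] := by
      rwa [add_comm, LinearIndependent.pair_add_smul_right_iff]
    obtain ⟨b', hb0', hb1'⟩ := exists_basis_apply_eq hW hvw'
    refine ⟨b', .inl ⟨l, m, hlm, by rw [hb0', hAv], ?_⟩⟩
    have x_eq : x + x / (m - l) * l = m * (x / (m - l)) := by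
      field [sub_ne_zero.2 hlm.symm]
    rw [hb1', map_add, map_smul, ← hAw, hAv, smul_add, smul_smul, smul_smul, ← x_eq]
    module
  · have hx : x ≠ 0 := by
      rintro rfl
      refine hA l (b.ext fun i ↦ ?_)
      fin_cases i <;> simp [hb0, hb1, hAv, ← hAw]
    have hvw' : LinearIndependent K ![x • v, w] := by
      simpa using
        (LinearIndependent.pair_add_smul_add_smul_iff (x := v) (y := w) x 0 0 1).2 ⟨hvw, by simpa⟩
    obtain ⟨b', hb0', hb1'⟩ := exists_basis_apply_eq hW hvw'
    refine ⟨b', .inr ⟨l, ?_, ?_⟩⟩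
    · rw [hb0', map_smul, hAv, smul_comm]
    · rw [hb0', hb1', hAw]

variable {A : Module.End K W} {Q : Set (ℙ K W)} {b : Module.Basis (Fin 2) K W}

theorem IsGridDatum.ncard_affinePart (h : IsGridDatum A Q) (b : Module.Basis (Fin 2) K W) :
    b 0 ∈ cone Q ∧ (affinePart b Q).ncard = 3 ∨ b 0 ∉ cone Q ∧ (affinePart b Q).ncard = 4 := by
  by_cases hb : b 0 ∈ cone Q
  · exact .inl ⟨hb, by rw [ncard_affinePart_of_mem hb, h.ncard_eq]⟩
  · exact .inr ⟨hb, by rw [ncard_affinePart_of_notMem hb, h.ncard_eq]⟩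

theorem IsGridDatum.ncard_affinePart_eq (h : IsGridDatum A Q) (b : Module.Basis (Fin 2) K W) :
    (affinePart b Q).ncard = 3 ∨ (affinePart b Q).ncard = 4 :=
  (h.ncard_affinePart b).imp And.right And.right

theorem IsGridDatum.finite_affinePart (h : IsGridDatum A Q) (b : Module.Basis (Fin 2) K W) :
    (affinePart b Q).Finite :=
  Set.finite_of_ncard_pos (by have := h.ncard_affinePart_eq b; lia)

theorem IsGridDatum.eigenvalue_ne_zero (h : IsGridDatum A Q) {m : K} {v : W} (hv : v ≠ 0)
    (hAv : A v = m • v) : m ≠ 0 := by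
  rintro rfl
  exact hv (h.injective (by simpa using hAv))

theorem IsGridDatum.one_sub (h : IsGridDatum A Q) : IsGridDatum (1 - A) Q := by
  refine ⟨h.ncard_eq, h.injective_one_sub, ?_, h.mapsTo_one_sub, ?_, fun c hc ↦ ?_⟩
  · simpa using h.injective
  · simpa using h.mapsTo
  · exact h.ne_smul_one (1 - c) (by rw [sub_smul, one_smul, ← hc, sub_sub_cancel])

variable [NeZero (2 : K)] [NeZero (3 : K)]

theorem IsGridDatum.not_jordan (h : IsGridDatum A Q) {m : K} (h0 : A (b 0) = m • b 0) :
    A (b 1) ≠ b 0 + m • b 1 := by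
  intro h1
  have hm : m ≠ 0 := h.eigenvalue_ne_zero (b.ne_zero 0) h0
  have mapsTo_add : Set.MapsTo (m⁻¹ + ·) (affinePart b Q) (affinePart b Q) := by
    convert mapsTo_affinePart h.mapsTo h0 (x := 1) (by rwa [one_smul]) hm using 2 with z
    field
  have nsmul_eq := ncard_nsmul_eq_zero_of_mapsTo_add (h.finite_affinePart b) mapsTo_add
  have three_ne : (3 : K) ≠ 0 := three_ne_zero
  have four_ne : (4 : K) ≠ 0 := four_ne_zero_of_neZero_two
  rcases h.ncard_affinePart_eq b with hn | hn <;> rw [hn] at nsmul_eq <;> simp_all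

theorem IsGridDatum.exists_basis_diagonal [IsAlgClosed K] (h : IsGridDatum A Q)
    (hW : Module.finrank K W = 2) :
    ∃ (b : Module.Basis (Fin 2) K W) (l m : K), l ≠ m ∧ A (b 0) = l • b 0 ∧ A (b 1) = m • b 1 ∧
      (b 1 ∈ cone Q → b 0 ∈ cone Q) := by
  obtain ⟨b, ⟨l, m, hlm, h0, h1⟩ | ⟨m, h0, h1⟩⟩ := exists_basis_diagonal_or_jordan hW h.ne_smul_one
  · by_cases hb : b 1 ∈ cone Q → b 0 ∈ cone Q
    · exact ⟨b, l, m, hlm, h0, h1, hb⟩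
    · refine ⟨b.reindex (Equiv.swap 0 1), m, l, hlm.symm, ?_⟩
      simp_all
  · exact absurd h1 (h.not_jordan h0)

end NormalForm

section RootPoints

variable {K : Type*} [Field K]

theorem eq_neg_one_of_sq_eq_one {r : K} (hr : r ≠ 1) (hr2 : r ^ 2 = 1) : r = -1 :=
  (sq_eq_one_iff.1 hr2).resolve_left hr

theorem isPrimitiveRoot_or_of_pow_eq_one {r s : K} {n : ℕ} (hn : n = 3 ∨ n = 4) (hr : r ≠ 1)
    (hs : s ≠ 1) (hrs : r ≠ s) (hrn : r ^ n = 1) (hsn : s ^ n = 1) :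
    IsPrimitiveRoot r n ∨ IsPrimitiveRoot s n := by
  have : Fact (Nat.Prime 3) := ⟨Nat.prime_three⟩
  rcases hn with rfl | rfl
  · exact .inl (IsPrimitiveRoot.iff_orderOf.2 (orderOf_eq_prime hrn hr))
  · by_cases hr2 : r ^ 2 = 1
    · have hs2 : s ^ 2 ≠ 1 := fun hs2 ↦
        hrs (by rw [eq_neg_one_of_sq_eq_one hr hr2, eq_neg_one_of_sq_eq_one hs hs2])
      exact .inr (IsPrimitiveRoot.iff_orderOf.2
        (orderOf_eq_prime_pow (p := 2) (n := 1) (by simpa using hs2) hsn))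
    · exact .inl (IsPrimitiveRoot.iff_orderOf.2
        (orderOf_eq_prime_pow (p := 2) (n := 1) (by simpa using hr2) hrn))

/-- The zeros of the binary quartic form `X ^ n * Y ^ (4 - n) - Y ^ 4`, for `n ≤ 4`: the `n`-th
roots of unity on the affine line, and the point at infinity if `n < 4`. -/
def rootPoints (K : Type*) [Field K] (n : ℕ) : Set (ℙ K (Fin 2 → K)) :=
  {p | p.rep 0 ^ n * p.rep 1 ^ (4 - n) = p.rep 1 ^ 4}

variable {n : ℕ}

theorem mem_cone_rootPoints_iff (hn : n ≤ 4) {v : Fin 2 → K} :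
    v ∈ cone (rootPoints K n) ↔ v ≠ 0 ∧ v 0 ^ n * v 1 ^ (4 - n) = v 1 ^ 4 := by
  have mk_mem_iff (hv : v ≠ 0) :
      mk K v hv ∈ rootPoints K n ↔ v 0 ^ n * v 1 ^ (4 - n) = v 1 ^ 4 := by
    obtain ⟨c, hc⟩ := exists_smul_eq_mk_rep K v hv
    have homogeneous :
        (c * v 0) ^ n * (c * v 1) ^ (4 - n) = c ^ 4 * (v 0 ^ n * v 1 ^ (4 - n)) := by
      rw [mul_pow, mul_pow, mul_mul_mul_comm, ← pow_add, Nat.add_sub_cancel' hn]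
    rw [rootPoints, Set.mem_ofPred_eq, ← hc]
    simp only [Units.smul_def, Pi.smul_apply, smul_eq_mul]
    rw [homogeneous, mul_pow, mul_right_inj' (pow_ne_zero 4 c.ne_zero)]
  exact ⟨fun ⟨hv, h⟩ ↦ ⟨hv, (mk_mem_iff hv).1 h⟩, fun ⟨hv, h⟩ ↦ ⟨hv, (mk_mem_iff hv).2 h⟩⟩

theorem affinePart_basisFun_rootPoints (hn : n ≤ 4) :
    affinePart (Pi.basisFun K (Fin 2)) (rootPoints K n) = {z | z ^ n = 1} := by
  ext z
  have hne : z • Pi.single 0 1 + Pi.single 1 1 ≠ (0 : Fin 2 → K) := fun h ↦ by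
    simpa using congr_fun h 1
  simp [affinePart, mem_cone_rootPoints_iff hn, hne]

theorem basisFun_zero_mem_cone_rootPoints_iff (hn : n ≤ 4) :
    Pi.basisFun K (Fin 2) 0 ∈ cone (rootPoints K n) ↔ n ≠ 4 := by
  have sub_ne_zero_iff : 4 - n ≠ 0 ↔ n ≠ 4 := by lia
  simp [mem_cone_rootPoints_iff hn, pow_eq_zero_iff', sub_ne_zero_iff]

theorem ncard_rootPoints [IsAlgClosed K] (hn : n = 3 ∨ n = 4) [NeZero (n : K)] :
    (rootPoints K n).ncard = 4 := by
  obtain ⟨ζ, hζ⟩ := HasEnoughRootsOfUnity.exists_primitiveRoot K n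
  have ncard_aff : (affinePart (Pi.basisFun K (Fin 2)) (rootPoints K n)).ncard = n := by
    rw [affinePart_basisFun_rootPoints (by lia)]
    simpa using ncard_setOf_pow_eq_pow (by lia) hζ one_ne_zero
  rcases hn with rfl | rfl
  · rw [ncard_affinePart_of_mem ((basisFun_zero_mem_cone_rootPoints_iff (by lia)).2 (by lia))]
      at ncard_aff
    lia
  · rwa [ncard_affinePart_of_notMem (mt (basisFun_zero_mem_cone_rootPoints_iff le_rfl).1 (by simp))]
      at ncard_aff

/-- The configuration on four lines with cross-ratio the diagonal matrix of `a`, and with the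
points `rootPoints K n` on each line. -/
def rootGrid (n : ℕ) (a : Fin 2 → K) : Set (ℙ K ((Fin 2 → K) × (Fin 2 → K))) :=
  gridSet (LinearMap.mulLeft K a) (rootPoints K n)

theorem one_sub_mulLeft (a : Fin 2 → K) :
    1 - LinearMap.mulLeft K a = LinearMap.mulLeft K (1 - a) :=
  LinearMap.ext fun v ↦ (one_sub_mul a v).symm

theorem ncard_rootGrid [IsAlgClosed K] (hn : n = 3 ∨ n = 4) [NeZero (n : K)] {a : Fin 2 → K}
    (ha : ∀ i, a i ≠ 0) (ha' : ∀ i, a i ≠ 1) : (rootGrid n a).ncard = 16 := by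
  have injective_mulLeft {c : Fin 2 → K} (hc : ∀ i, c i ≠ 0) :
      Function.Injective (LinearMap.mulLeft K c) :=
    (Pi.isUnit_iff.2 fun i ↦ (hc i).isUnit).mul_right_injective
  have injective : Function.Injective (LinearMap.mulLeft K a) := injective_mulLeft ha
  have injective_one_sub : Function.Injective (LinearMap.mulLeft K (1 - a)) :=
    injective_mulLeft fun i ↦ sub_ne_zero.2 (ha' i).symm
  rw [rootGrid, ncard_gridSet injective (one_sub_mulLeft a ▸ injective_one_sub),
    ncard_rootPoints hn]

theorem projEquiv_rootGrid_one_sub (n : ℕ) (a : Fin 2 → K) :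
    ProjEquiv (rootGrid n a) (rootGrid n (1 - a)) := by
  rw [rootGrid, rootGrid, ← one_sub_mulLeft]
  exact projEquiv_gridSet_one_sub _ _

theorem mul_mem_cone_rootPoints (hn : n ≤ 4) {a v : Fin 2 → K} (ha : IsUnit a)
    (han : a 0 ^ n = a 1 ^ n) (hv : v ∈ cone (rootPoints K n)) :
    a * v ∈ cone (rootPoints K n) := by
  rw [mem_cone_rootPoints_iff hn] at hv ⊢
  refine ⟨ha.mul_right_eq_zero.not.2 hv.1, ?_⟩
  calc (a 0 * v 0) ^ n * (a 1 * v 1) ^ (4 - n)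
      = a 1 ^ n * a 1 ^ (4 - n) * (v 0 ^ n * v 1 ^ (4 - n)) := by rw [← han]; ring
    _ = (a 1 * v 1) ^ 4 := by rw [hv.2, ← pow_add, Nat.add_sub_cancel' hn, mul_pow]

theorem projEquiv_rootGrid_inv (hn : n ≤ 4) {a a' : Fin 2 → K} (haa' : a' * a = 1)
    (han : a 0 ^ n = a 1 ^ n) : ProjEquiv (rootGrid n a) (rootGrid n a') := by
  have haa'_apply (i : Fin 2) : a' i * a i = 1 := congr_fun haa' i
  have han' : a' 0 ^ n = a' 1 ^ n := by
    rw [eq_inv_of_mul_eq_one_left (haa'_apply 0), eq_inv_of_mul_eq_one_left (haa'_apply 1),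
      inv_pow, inv_pow, han]
  refine projEquiv_gridSet_inv (LinearMap.ext fun v ↦ ?_) (Set.Subset.antisymm ?_ fun v hv ↦ ?_)
  · change a' * (a * v) = v
    rw [← mul_assoc, haa', one_mul]
  · rintro _ ⟨v, hv, rfl⟩
    exact mul_mem_cone_rootPoints hn (.of_mul_eq_one_right a' haa') han hv
  · refine ⟨a' * v, mul_mem_cone_rootPoints hn (.of_mul_eq_one a haa') han' hv, ?_⟩
    change a * (a' * v) = v
    rw [← mul_assoc, mul_comm a, haa', one_mul]

end RootPoints

section DiagonalForm

variable {K W : Type*} [Field K] [AddCommGroup W] [Module K W]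

theorem zero_notMem_of_mapsTo_mul {T : Set K} (hT : T.ncard = 3) {r s : K} (hr0 : r ≠ 0)
    (hs0 : s ≠ 0) (hr1 : r ≠ 1) (hs1 : s ≠ 1) (hrs : r ≠ s) (hr : Set.MapsTo (r * ·) T T)
    (hs : Set.MapsTo (s * ·) T T) : 0 ∉ T := by
  intro h0
  have hfin : (T \ {0}).Finite := (Set.finite_of_ncard_pos (by lia)).sdiff
  have eq_neg_one {q : K} (hq0 : q ≠ 0) (hq1 : q ≠ 1) (hq : Set.MapsTo (q * ·) T T) : q = -1 := by
    have hq' : Set.MapsTo (q * ·) (T \ {0}) (T \ {0}) := fun z hz ↦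
      ⟨hq hz.1, mul_ne_zero hq0 hz.2⟩
    have hq2 := pow_ncard_eq_one_of_mapsTo_mul hfin (by simp) hq0 hq'
    rw [Set.ncard_sdiff_singleton_of_mem h0, hT] at hq2
    exact eq_neg_one_of_sq_eq_one hq1 hq2
  exact hrs ((eq_neg_one hr0 hr1 hr).trans (eq_neg_one hs0 hs1 hs).symm)

theorem exists_eq_setOf_pow_eq_pow {T : Set K} {n : ℕ} (hn : n = 3 ∨ n = 4) (hT : T.ncard = n)
    (h0 : n = 4 → 0 ∉ T) {r s : K} (hr0 : r ≠ 0) (hs0 : s ≠ 0) (hr1 : r ≠ 1) (hs1 : s ≠ 1)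
    (hrs : r ≠ s) (hr : Set.MapsTo (r * ·) T T) (hs : Set.MapsTo (s * ·) T T) :
    r ^ n = 1 ∧ s ^ n = 1 ∧ ∃ c ≠ 0, T = {z | z ^ n = c ^ n} := by
  have hn0 : 0 < n := by lia
  have h0 : 0 ∉ T := by
    rcases hn with rfl | rfl
    · exact zero_notMem_of_mapsTo_mul hT hr0 hs0 hr1 hs1 hrs hr hs
    · exact h0 rfl
  have hfin : T.Finite := Set.finite_of_ncard_pos (by lia)
  have hrn : r ^ n = 1 := hT ▸ pow_ncard_eq_one_of_mapsTo_mul hfin h0 hr0 hr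
  have hsn : s ^ n = 1 := hT ▸ pow_ncard_eq_one_of_mapsTo_mul hfin h0 hs0 hs
  obtain ⟨c, hcT⟩ : T.Nonempty := Set.nonempty_of_ncard_ne_zero (by lia)
  have hc : c ≠ 0 := ne_of_mem_of_not_mem hcT h0
  refine ⟨hrn, hsn, c, hc, ?_⟩
  rcases isPrimitiveRoot_or_of_pow_eq_one hn hr1 hs1 hrs hrn hsn with hζ | hζ
  · exact eq_setOf_pow_eq_pow_of_mapsTo_mul hn0 hζ hT hr hcT hc
  · exact eq_setOf_pow_eq_pow_of_mapsTo_mul hn0 hζ hT hs hcT hc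

variable {A : Module.End K W} {Q : Set (ℙ K W)} {b : Module.Basis (Fin 2) K W}

theorem exists_image_cone_eq_cone_rootPoints {n : ℕ} (hn : n ≤ 4) {c : K} (hc : c ≠ 0)
    (haff : affinePart b Q = {z | z ^ n = c ^ n}) (hinf : b 0 ∈ cone Q ↔ n ≠ 4) :
    ∃ P : W ≃ₗ[K] Fin 2 → K, P (b 0) = Pi.single 0 c⁻¹ ∧ P (b 1) = Pi.single 1 1 ∧
      P '' cone Q = cone (rootPoints K n) := by
  let b' := b.unitsSMul ![Units.mk0 c hc, 1]
  have hb0 : b' 0 = c • b 0 := by simp [b', Module.Basis.unitsSMul_apply, Units.smul_def]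
  have hb1 : b' 1 = b 1 := by simp [b', Module.Basis.unitsSMul_apply]
  refine ⟨b'.equiv (Pi.basisFun K (Fin 2)) (.refl _), ?_, ?_, image_equiv_cone_eq ?_ ?_⟩
  · rw [← inv_smul_smul₀ hc (b 0), ← hb0, map_smul, Module.Basis.equiv_apply]
    simp [← Pi.single_smul]
  · rw [← hb1, Module.Basis.equiv_apply]
    simp
  · ext z
    have mem_iff : z * c ∈ affinePart b Q ↔ z ∈ {z | z ^ n = 1} := by
      simp [haff, mul_pow, hc]
    rw [affinePart_basisFun_rootPoints hn, ← mem_iff, affinePart, affinePart, hb0, hb1]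
    simp [smul_smul]
  · rw [hb0, smul_mem_cone_iff hc, hinf, basisFun_zero_mem_cone_rootPoints_iff hn]

theorem IsGridDatum.mapsTo_mul_affinePart (h : IsGridDatum A Q) {l m : K}
    (h0 : A (b 0) = l • b 0) (h1 : A (b 1) = m • b 1) :
    Set.MapsTo (l / m * ·) (affinePart b Q) (affinePart b Q) := by
  have hm : m ≠ 0 := h.eigenvalue_ne_zero (b.ne_zero 1) h1
  convert mapsTo_affinePart h.mapsTo h0 (x := 0) (by rwa [zero_smul, zero_add]) hm using 2 with z
  ring

variable [IsAlgClosed K] [NeZero (2 : K)] [NeZero (3 : K)]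

theorem IsGridDatum.exists_basis_affinePart_eq (h : IsGridDatum A Q)
    (hW : Module.finrank K W = 2) :
    ∃ (b : Module.Basis (Fin 2) K W) (l m c : K) (n : ℕ), (n = 3 ∨ n = 4) ∧ l ≠ m ∧
      A (b 0) = l • b 0 ∧ A (b 1) = m • b 1 ∧ l ^ n = m ^ n ∧ (1 - l) ^ n = (1 - m) ^ n ∧
      c ≠ 0 ∧ affinePart b Q = {z | z ^ n = c ^ n} ∧ (b 0 ∈ cone Q ↔ n ≠ 4) := by
  obtain ⟨b, l, m, hlm, h0, h1, hb⟩ := h.exists_basis_diagonal hW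
  have h0' : (1 - A) (b 0) = (1 - l) • b 0 := by simp [h0, sub_smul]
  have h1' : (1 - A) (b 1) = (1 - m) • b 1 := by simp [h1, sub_smul]
  have hl : l ≠ 0 := h.eigenvalue_ne_zero (b.ne_zero 0) h0
  have hm : m ≠ 0 := h.eigenvalue_ne_zero (b.ne_zero 1) h1
  have hl' : 1 - l ≠ 0 := h.one_sub.eigenvalue_ne_zero (b.ne_zero 0) h0'
  have hm' : 1 - m ≠ 0 := h.one_sub.eigenvalue_ne_zero (b.ne_zero 1) h1'
  obtain ⟨n, hn, hT, hinf⟩ : ∃ n, (n = 3 ∨ n = 4) ∧ (affinePart b Q).ncard = n ∧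
      (b 0 ∈ cone Q ↔ n ≠ 4) := by
    rcases h.ncard_affinePart b with ⟨hb0, hT⟩ | ⟨hb0, hT⟩
    · exact ⟨3, .inl rfl, hT, by simpa⟩
    · exact ⟨4, .inr rfl, hT, by simpa⟩
  have h0T : n = 4 → 0 ∉ affinePart b Q := fun hn4 h0T ↦
    hinf.1 (hb (zero_mem_affinePart_iff.1 h0T)) hn4
  obtain ⟨hrn, hsn, c, hc, haff⟩ := exists_eq_setOf_pow_eq_pow hn hT h0T (div_ne_zero hl hm)
    (div_ne_zero hl' hm') (mt (div_eq_one_iff_eq hm).1 hlm)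
    (mt (div_eq_one_iff_eq hm').1 (by simpa using hlm)) (by rw [Ne, div_eq_div_iff hm hm']; grind)
    (h.mapsTo_mul_affinePart h0 h1) (h.one_sub.mapsTo_mul_affinePart h0' h1')
  rw [div_pow, div_eq_one_iff_eq (pow_ne_zero n ‹_›)] at hrn hsn
  exact ⟨b, l, m, c, n, hn, hlm, h0, h1, hrn, hsn, hc, haff, hinf⟩

theorem IsGridDatum.exists_projEquiv_rootGrid (h : IsGridDatum A Q)
    (hW : Module.finrank K W = 2) :
    ∃ (n : ℕ) (a : Fin 2 → K), (n = 3 ∨ n = 4) ∧ a 0 ≠ a 1 ∧ a 0 ^ n = a 1 ^ n ∧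
      (1 - a 0) ^ n = (1 - a 1) ^ n ∧ ProjEquiv (gridSet A Q) (rootGrid n a) := by
  obtain ⟨b, l, m, c, n, hn, hlm, h0, h1, hlmn, hlmn', hc, haff, hinf⟩ :=
    h.exists_basis_affinePart_eq hW
  obtain ⟨P, hP0, hP1, hPQ⟩ := exists_image_cone_eq_cone_rootPoints (by lia) hc haff hinf
  have hP (u : W) : P (A u) = LinearMap.mulLeft K ![l, m] (P u) := by
    obtain ⟨x, y, rfl⟩ := exists_smul_add_smul_eq b u
    ext i
    fin_cases i <;> simp [h0, h1, hP0, hP1, mul_left_comm, mul_comm]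
  exact ⟨n, ![l, m], hn, hlm, hlmn, hlmn', projEquiv_gridSet_conj P hP hPQ⟩

end DiagonalForm

section Models

variable {K : Type*} [Field K]

theorem add_eq_one_and_mul_eq_one_of_pow_three_eq [NeZero (3 : K)] {l m : K} (hlm : l ≠ m)
    (h : l ^ 3 = m ^ 3) (h' : (1 - l) ^ 3 = (1 - m) ^ 3) : l + m = 1 ∧ l * m = 1 := by
  have three_ne : (3 : K) ≠ 0 := three_ne_zero
  have quotient : l ^ 2 + l * m + m ^ 2 = 0 :=
    mul_left_cancel₀ (sub_ne_zero.2 hlm) (by linear_combination h)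
  have quotient' : 3 * (l + m - 1) = 0 :=
    mul_left_cancel₀ (sub_ne_zero.2 hlm) (by linear_combination h + h')
  grind

theorem add_mul_cases_of_pow_four_eq [NeZero (2 : K)] {l m : K} (hlm : l ≠ m)
    (h : l ^ 4 = m ^ 4) (h' : (1 - l) ^ 4 = (1 - m) ^ 4) :
    l + m = 0 ∧ l * m = 1 ∨ l + m = 2 ∧ l * m = 2 ∨ l + m = 1 ∧ 2 * (l * m) = 1 := by
  have two_ne : (2 : K) ≠ 0 := two_ne_zero
  have quotient : (l + m) * (l ^ 2 + m ^ 2) = 0 :=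
    mul_left_cancel₀ (sub_ne_zero.2 hlm) (by linear_combination h)
  have quotient' : (2 - l - m) * ((1 - l) ^ 2 + (1 - m) ^ 2) = 0 :=
    mul_left_cancel₀ (sub_ne_zero.2 hlm) (by linear_combination -h')
  rcases mul_eq_zero.1 quotient with h1 | h1 <;> rcases mul_eq_zero.1 quotient' with h2 | h2 <;>
    grind

variable {a : Fin 2 → K}

theorem projEquiv_rootGrid_three [NeZero (3 : K)] {z : K} (hz : z * (1 - z) = 1)
    (hne : a 0 ≠ a 1) (ha : a 0 ^ 3 = a 1 ^ 3) (ha' : (1 - a 0) ^ 3 = (1 - a 1) ^ 3) :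
    ProjEquiv (rootGrid 3 ![z, 1 - z]) (rootGrid 3 a) := by
  obtain ⟨add_eq, mul_eq⟩ := add_eq_one_and_mul_eq_one_of_pow_three_eq hne ha ha'
  have factors : (a 0 - z) * (a 0 - (1 - z)) = 0 := by grind
  rcases mul_eq_zero.1 factors with h | h
  · obtain rfl : a = ![z, 1 - z] := by ext i; fin_cases i <;> simp <;> grind
    exact .refl _
  · obtain rfl : a = 1 - ![z, 1 - z] := by ext i; fin_cases i <;> simp <;> grind
    exact projEquiv_rootGrid_one_sub 3 _

theorem projEquiv_rootGrid_four_of_add_eq_zero {i : K} (hi : i ^ 2 = -1) (hadd : a 0 + a 1 = 0)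
    (hmul : a 0 * a 1 = 1) : ProjEquiv (rootGrid 4 ![i, -i]) (rootGrid 4 a) := by
  have factors : (a 0 - i) * (a 0 + i) = 0 := by grind
  rcases mul_eq_zero.1 factors with h | h
  · obtain rfl : a = ![i, -i] := by ext j; fin_cases j <;> simp <;> grind
    exact .refl _
  · refine projEquiv_rootGrid_inv le_rfl ?_ (by simp [Even.neg_pow (by decide : Even 4)])
    ext j
    fin_cases j <;> simp <;> grind

theorem projEquiv_rootGrid_four_of_add_eq_two {i : K} (hi : i ^ 2 = -1) (hadd : a 0 + a 1 = 2)
    (hmul : a 0 * a 1 = 2) : ProjEquiv (rootGrid 4 ![i, -i]) (rootGrid 4 a) := by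
  have h := projEquiv_rootGrid_four_of_add_eq_zero (a := 1 - a) hi (by simp; grind) (by simp; grind)
  exact h.trans (projEquiv_rootGrid_one_sub 4 a).symm

theorem projEquiv_rootGrid_four [NeZero (2 : K)] {i : K} (hi : i ^ 2 = -1)
    (hne : a 0 ≠ a 1) (ha : a 0 ^ 4 = a 1 ^ 4) (ha' : (1 - a 0) ^ 4 = (1 - a 1) ^ 4) :
    ProjEquiv (rootGrid 4 ![i, -i]) (rootGrid 4 a) := by
  rcases add_mul_cases_of_pow_four_eq hne ha ha' with
    ⟨hadd, hmul⟩ | ⟨hadd, hmul⟩ | ⟨hadd, hmul⟩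
  · exact projEquiv_rootGrid_four_of_add_eq_zero hi hadd hmul
  · exact projEquiv_rootGrid_four_of_add_eq_two hi hadd hmul
  · have h := projEquiv_rootGrid_four_of_add_eq_two (a := ![2 * a 1, 2 * a 0]) hi
      (by simp; grind) (by simp; grind)
    refine h.trans (projEquiv_rootGrid_inv le_rfl ?_ ha).symm
    ext j
    fin_cases j <;> simp <;> grind

variable [IsAlgClosed K]

theorem exists_mul_one_sub_eq_one [NeZero (2 : K)] : ∃ z : K, z * (1 - z) = 1 := by
  obtain ⟨d, hd⟩ := IsAlgClosed.exists_eq_mul_self (-3 : K)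
  obtain ⟨z, hz⟩ := exists_quadratic_eq_zero (a := (1 : K)) (b := -1) (c := 1) one_ne_zero
    ⟨d, by rw [← hd, discrim]; norm_num⟩
  exact ⟨z, by linear_combination -hz⟩

theorem ncard_rootGrid_three [NeZero (3 : K)] {z : K} (hz : z * (1 - z) = 1) :
    (rootGrid 3 ![z, 1 - z]).ncard = 16 := by
  have : NeZero ((3 : ℕ) : K) := ⟨mod_cast three_ne_zero (α := K)⟩
  exact ncard_rootGrid (.inl rfl) (Fin.forall_fin_two.2 (by simp; grind))
    (Fin.forall_fin_two.2 (by simp; grind))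

theorem ncard_rootGrid_four [NeZero (2 : K)] {i : K} (hi : i ^ 2 = -1) :
    (rootGrid 4 ![i, -i]).ncard = 16 := by
  have two_ne : (2 : K) ≠ 0 := two_ne_zero
  have : NeZero ((4 : ℕ) : K) := ⟨mod_cast four_ne_zero_of_neZero_two⟩
  exact ncard_rootGrid (.inr rfl) (Fin.forall_fin_two.2 (by simp; grind))
    (Fin.forall_fin_two.2 (by simp; grind))

end Models

section Classification

theorem exists_projEquiv_of_finrank_eq {K V V' : Type*} [Field K] [AddCommGroup V] [Module K V]
    [AddCommGroup V'] [Module K V'] [FiniteDimensional K V] [FiniteDimensional K V']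
    (h : Module.finrank K V = Module.finrank K V') (S : Set (ℙ K V)) :
    ∃ S' : Set (ℙ K V'), S'.ncard = S.ncard ∧ ProjEquiv S' S := by
  let F := LinearEquiv.ofFinrankEq V V' h
  exact ⟨_, ncard_image_map F.injective S, .symm ⟨F, rfl⟩⟩

theorem halfGrid_classification_two_models_general {K V : Type*} [Field K] [IsAlgClosed K]
    [NeZero (2 : K)] [NeZero (3 : K)] [AddCommGroup V] [Module K V]
    (hV : Module.finrank K V = 4) :
    ∃ W₁ W₂ : Set (ℙ K V), W₁.ncard = 16 ∧ W₂.ncard = 16 ∧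
      ∀ (R : Fin 4 → Submodule K V) (Z : Fin 4 → Set (ℙ K V)), IsHalfGrid R Z →
        ProjEquiv W₁ (⋃ x, Z x) ∨ ProjEquiv W₂ (⋃ x, Z x) := by
  have : FiniteDimensional K V := .of_finrank_pos (by lia)
  have finrank_eq : Module.finrank K ((Fin 2 → K) × (Fin 2 → K)) = Module.finrank K V := by
    simp [hV]
  obtain ⟨z, hz⟩ := exists_mul_one_sub_eq_one (K := K)
  obtain ⟨i, hi⟩ := IsAlgClosed.exists_pow_nat_eq (-1 : K) two_pos
  obtain ⟨W₁, hW₁, equiv₁⟩ := exists_projEquiv_of_finrank_eq finrank_eq (rootGrid 3 ![z, 1 - z])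
  obtain ⟨W₂, hW₂, equiv₂⟩ := exists_projEquiv_of_finrank_eq finrank_eq (rootGrid 4 ![i, -i])
  refine ⟨W₁, W₂, hW₁.trans (ncard_rootGrid_three hz), hW₂.trans (ncard_rootGrid_four hi),
    fun R Z h ↦ ?_⟩
  obtain ⟨A, Q, hAQ, hZ⟩ := h.exists_isGridDatum
  obtain ⟨n, a, rfl | rfl, hne, ha, ha', hQ⟩ := hAQ.exists_projEquiv_rootGrid (h.finrank_eq 0)
  · exact .inl ((equiv₁.trans (projEquiv_rootGrid_three hz hne ha ha')).trans (hQ.symm.trans hZ))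
  · exact .inr ((equiv₂.trans (projEquiv_rootGrid_four hi hne ha ha')).trans (hQ.symm.trans hZ))

end Classification

/-- There are two 16-point subsets `W₁, W₂` of `ℙ³` such that every
16-point set `Z = Z 0 ∪ Z 1 ∪ Z 2 ∪ Z 3` satisfying the half-grid hypotheses is
projectively equivalent to `W₁` or to `W₂`: some linear automorphism of `ℂ⁴` induces a
projective transformation of `ℙ³` mapping `W₁` onto `Z` or mapping `W₂` onto `Z`.  In
other words, up to projective equivalence there are at most two sets of 16 points
distributed evenly on 4 skew lines satisfying the half-grid hypotheses. -/
theorem halfGrid_classification_two_models :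
    ∃ W₁ W₂ : Set (ℙ ℂ (Fin 4 → ℂ)), W₁.ncard = 16 ∧ W₂.ncard = 16 ∧
      ∀ (R : Fin 4 → Submodule ℂ (Fin 4 → ℂ)) (Z : Fin 4 → Set (ℙ ℂ (Fin 4 → ℂ))),
        HalfGridHyp R Z →
        (∃ F : (Fin 4 → ℂ) ≃ₗ[ℂ] (Fin 4 → ℂ),
          Projectivization.map F.toLinearMap F.injective '' W₁ = ⋃ x, Z x) ∨
        (∃ F : (Fin 4 → ℂ) ≃ₗ[ℂ] (Fin 4 → ℂ),
          Projectivization.map F.toLinearMap F.injective '' W₂ = ⋃ x, Z x) := by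
  obtain ⟨W₁, W₂, hW₁, hW₂, h⟩ :=
    halfGrid_classification_two_models_general (Module.finrank_fin_fun ℂ (n := 4))
  exact ⟨W₁, W₂, hW₁, hW₂, fun R Z hRZ ↦ h R Z hRZ.isHalfGrid⟩
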